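/- arXiv:2008.09733 — 5 statements merged into one kernel-verified Lean document; each statement's English description precedes it below -/
import Mathlib

section
/- For every list w = (w_1, …, w_m) with entries in [0,1], all a, b ∈ [0,1], and every list l with entries in [0,1], the effect of swapping two adjacent attractiveness values is given exactly by R_{g,q}(w ++ (a, b) ++ l) − R_{g,q}(w ++ (b, a) ++ l) = (∏_{j=1}^m ((g−q)·w_j + q)) · (a − b) · (1 − q). In particular the contribution of the suffix l cancels, and swapping two adjacent items so that the larger attractiveness comes first never decreases the expected reward. -/
/-- Expected reward `R_{g,q}` of a list of attractiveness values. -/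
def reward (g q : ℝ) : List ℝ → ℝ
  | [] => 0
  | z :: rest => z + ((g - q) * z + q) * reward g q rest

theorem reward_swap_aux (g q a b : ℝ) (l w : List ℝ) :
    reward g q (w ++ a :: b :: l) - reward g q (w ++ b :: a :: l) =
      (w.map (fun x => (g - q) * x + q)).prod * (a - b) * (1 - q) := by
  induction w with
  | nil => simp only [List.nil_append, reward, List.map_nil, List.prod_nil]; ring
  | cons x w ih =>
    simp only [List.cons_append, reward, List.map_cons, List.prod_cons]
    linear_combination ((g - q) * x + q) * ih

/-- Exact effect of swapping two adjacent attractiveness values: the contribution of the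
suffix `l` cancels, and swapping two adjacent items so that the larger attractiveness
comes first never decreases the expected reward. -/
theorem adjacent_swap (g q : ℝ) (hq0 : 0 ≤ q) (hqg : q ≤ g) (hg1 : g ≤ 1)
    (w l : List ℝ) (hw : ∀ x ∈ w, x ∈ Set.Icc (0 : ℝ) 1)
    (hl : ∀ x ∈ l, x ∈ Set.Icc (0 : ℝ) 1)
    (a b : ℝ) (ha : a ∈ Set.Icc (0 : ℝ) 1) (hb : b ∈ Set.Icc (0 : ℝ) 1) :
    reward g q (w ++ a :: b :: l) - reward g q (w ++ b :: a :: l) =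
      (w.map (fun x => (g - q) * x + q)).prod * (a - b) * (1 - q) ∧
    (b ≤ a → reward g q (w ++ b :: a :: l) ≤ reward g q (w ++ a :: b :: l)) := by
  have h := reward_swap_aux g q a b l w
  refine ⟨h, fun hab => ?_⟩
  have hp : 0 ≤ (w.map (fun x => (g - q) * x + q)).prod := by
    apply List.prod_nonneg
    intro y hy
    obtain ⟨x, hx, rfl⟩ := List.mem_map.1 hy
    exact add_nonneg (mul_nonneg (sub_nonneg.2 hqg) (hw x hx).1) hq0
  have h2 := mul_nonneg (mul_nonneg hp (sub_nonneg.2 hab)) (sub_nonneg.2 (hqg.trans hg1))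
  linarith
end

section
/- Let A, B, a, b ∈ [0,1] with A ≥ B and a ≥ b, and let w and l be lists with entries in [0,1]. Then R_{g,q}(w ++ (A·a, B·b) ++ l) ≥ R_{g,q}(w ++ (A·b, B·a) ++ l). (This is the same-category exchange step in the proof of Theorem 1: A and B play the roles of the discount values f(h) ≥ f(h+1) at two consecutive within-category positions, and a ≥ b are the relevances of two adjacent items of the same category, so placing the more relevant item first never decreases the expected reward.) -/
theorem reward_nonneg_aux (g q : ℝ) (hq0 : 0 ≤ q) (hqg : q ≤ g) (l : List ℝ)
    (hl : ∀ x ∈ l, x ∈ Set.Icc (0 : ℝ) 1) : 0 ≤ reward g q l := by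
  induction l with
  | nil => simp [reward]
  | cons z t ih =>
    have hz := (hl z (by simp)).1
    have ht := ih (fun x hx => hl x (by simp [hx]))
    have hd : 0 ≤ g - q := by linarith
    simp only [reward]
    positivity

/-- Same-category exchange step: with discount values `A ≥ B` and relevances `a ≥ b`,
placing the more relevant item first never decreases the expected reward. -/
theorem same_category_exchange (g q : ℝ) (hq0 : 0 ≤ q) (hqg : q ≤ g) (hg1 : g ≤ 1)
    (A B a b : ℝ) (hA : A ∈ Set.Icc (0 : ℝ) 1) (hB : B ∈ Set.Icc (0 : ℝ) 1)
    (ha : a ∈ Set.Icc (0 : ℝ) 1) (hb : b ∈ Set.Icc (0 : ℝ) 1)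
    (hAB : B ≤ A) (hab : b ≤ a)
    (w l : List ℝ) (hw : ∀ x ∈ w, x ∈ Set.Icc (0 : ℝ) 1)
    (hl : ∀ x ∈ l, x ∈ Set.Icc (0 : ℝ) 1) :
    reward g q (w ++ A * b :: B * a :: l) ≤ reward g q (w ++ A * a :: B * b :: l) := by
  induction w with
  | nil =>
    have hL := reward_nonneg_aux g q hq0 hqg l hl
    have hd : 0 ≤ g - q := by linarith
    have h1 : 0 ≤ A - q * B := by nlinarith [hB.1, hB.2]
    have h2 : 0 ≤ A - B := by linarith
    have h3 : 0 ≤ a - b := by linarith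
    simp only [List.nil_append, reward]
    have key : 0 ≤ (a - b) * ((A - q * B) + reward g q l * (g - q) * q * (A - B)) := by
      positivity
    linarith
  | cons z t ih =>
    have hz := (hw z (by simp)).1
    have ht := ih (fun x hx => hw x (by simp [hx]))
    have hd : 0 ≤ g - q := by linarith
    have hc : 0 ≤ (g - q) * z + q := by positivity
    simp only [List.cons_append, reward]
    have := mul_le_mul_of_nonneg_left ht hc
    linarith
end

section
/- (Lemma 2) Fix an ordering S of the N items and fix the discount function f. If u, u' ∈ [0,1]^N satisfy u_i ≤ u'_i for every item i, then the expected reward of S computed with relevances u' is at least the expected reward of S computed with relevances u: E[R(S, u')] ≥ E[R(S, u)]. -/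
/-- Auxiliary: attractiveness values of the items in `S`, given that the
items in `prev` have already been shown. -/
def attrAux {N K : ℕ} (f : ℕ → ℝ) (u : Fin N → ℝ) (C : Fin N → Fin K) :
    List (Fin N) → List (Fin N) → List ℝ
  | _, [] => []
  | prev, i :: rest =>
      f (prev.countP (fun j => decide (C j = C i))) * u i ::
        attrAux f u C (prev ++ [i]) rest

/-- The list of attractiveness values `z_{S_1}(S), …, z_{S_N}(S)` of an ordering `S`. -/
def attrList {N K : ℕ} (f : ℕ → ℝ) (u : Fin N → ℝ) (C : Fin N → Fin K)
    (S : List (Fin N)) : List ℝ :=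
  attrAux f u C [] S

theorem reward_attrAux_mono {N K : ℕ} (g q : ℝ) (hq0 : 0 ≤ q) (hqg : q ≤ g)
    (f : ℕ → ℝ) (hf : ∀ r, 0 ≤ f r) (C : Fin N → Fin K)
    (u u' : Fin N → ℝ) (hu : ∀ i, 0 ≤ u i) (huu' : ∀ i, u i ≤ u' i)
    (S : List (Fin N)) : ∀ prev : List (Fin N),
    0 ≤ reward g q (attrAux f u C prev S) ∧
    reward g q (attrAux f u C prev S) ≤ reward g q (attrAux f u' C prev S) := by
  induction S with
  | nil => intro prev; simp [attrAux, reward]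
  | cons i rest ih =>
    intro prev
    obtain ⟨h0, h1⟩ := ih (prev ++ [i])
    simp only [attrAux, reward]
    have ha := hf (prev.countP (fun j => decide (C j = C i)))
    generalize f (prev.countP (fun j => decide (C j = C i))) = a at ha ⊢
    have hz : 0 ≤ a * u i := mul_nonneg ha (hu i)
    have hzz : a * u i ≤ a * u' i := mul_le_mul_of_nonneg_left (huu' i) ha
    have hd : 0 ≤ g - q := sub_nonneg.2 hqg
    have hc : 0 ≤ (g - q) * (a * u i) + q := add_nonneg (mul_nonneg hd hz) hq0
    have hcc : (g - q) * (a * u i) + q ≤ (g - q) * (a * u' i) + q :=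
      add_le_add (mul_le_mul_of_nonneg_left hzz hd) le_rfl
    exact ⟨add_nonneg hz (mul_nonneg hc h0),
      add_le_add hzz (mul_le_mul hcc h1 h0 (hc.trans hcc))⟩

/-- Lemma 2: for a fixed ordering `S` and discount function `f`, the expected reward is
monotone nondecreasing in the vector of intrinsic relevances. -/
theorem reward_mono_in_u {N K : ℕ} (g q : ℝ) (hq0 : 0 ≤ q) (hqg : q ≤ g) (hg1 : g ≤ 1)
    (f : ℕ → ℝ) (hf_anti : Antitone f) (hf0 : f 0 = 1)
    (hf_mem : ∀ r, f r ∈ Set.Icc (0 : ℝ) 1)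
    (C : Fin N → Fin K)
    (u u' : Fin N → ℝ) (hu : ∀ i, 0 ≤ u i) (hu' : ∀ i, u' i ≤ 1)
    (huu' : ∀ i, u i ≤ u' i)
    (S : List (Fin N)) (hS : S.Perm (List.finRange N)) :
    reward g q (attrList f u C S) ≤ reward g q (attrList f u' C S) := by
  exact (reward_attrAux_mono g q hq0 hqg f (fun r => (hf_mem r).1) C u u' hu huu' S []).2
end

section
/- (Lemma 5) Fix an ordering S of the N items. Let f, f' : ℕ → [0,1] and u, u' ∈ [0,1]^N satisfy f(r) ≤ f'(r) for every r ∈ ℕ and u_i ≤ u'_i for every item i. Then the expected reward of S computed with discount f' and relevances u' is at least the expected reward of S computed with discount f and relevances u: E[R(S, f', u')] ≥ E[R(S, f, u)]. -/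
theorem reward_attr_aux {N K : ℕ} (g q : ℝ) (hq0 : 0 ≤ q) (hqg : q ≤ g)
    (C : Fin N → Fin K)
    (f f' : ℕ → ℝ) (hf : ∀ r, 0 ≤ f r) (hff' : ∀ r, f r ≤ f' r)
    (u u' : Fin N → ℝ) (hu : ∀ i, 0 ≤ u i) (huu' : ∀ i, u i ≤ u' i)
    (S : List (Fin N)) : ∀ prev : List (Fin N),
    0 ≤ reward g q (attrAux f u C prev S) ∧
    reward g q (attrAux f u C prev S) ≤ reward g q (attrAux f' u' C prev S) := by
  induction S with
  | nil => intro prev; simp [attrAux, reward]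
  | cons i rest ih =>
    intro prev
    obtain ⟨h0, h1⟩ := ih (prev ++ [i])
    simp only [attrAux, reward]
    generalize prev.countP (fun j => decide (C j = C i)) = r
    have hz : 0 ≤ f r * u i := mul_nonneg (hf r) (hu i)
    have hzz : f r * u i ≤ f' r * u' i :=
      mul_le_mul (hff' r) (huu' i) (hu i) ((hf r).trans (hff' r))
    have hd : 0 ≤ g - q := sub_nonneg.2 hqg
    have ha : 0 ≤ (g - q) * (f r * u i) + q := add_nonneg (mul_nonneg hd hz) hq0
    have hb : (g - q) * (f r * u i) + q ≤ (g - q) * (f' r * u' i) + q :=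
      add_le_add (mul_le_mul_of_nonneg_left hzz hd) le_rfl
    exact ⟨add_nonneg hz (mul_nonneg ha h0),
      add_le_add hzz (mul_le_mul hb h1 h0 (ha.trans hb))⟩

/-- Lemma 5: for a fixed ordering `S`, the expected reward is monotone nondecreasing
jointly in the discount function and the vector of intrinsic relevances. -/
theorem reward_mono_in_f_u {N K : ℕ} (g q : ℝ) (hq0 : 0 ≤ q) (hqg : q ≤ g) (hg1 : g ≤ 1)
    (C : Fin N → Fin K)
    (f f' : ℕ → ℝ) (hf : ∀ r, 0 ≤ f r) (hf' : ∀ r, f' r ≤ 1)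
    (hff' : ∀ r, f r ≤ f' r)
    (u u' : Fin N → ℝ) (hu : ∀ i, 0 ≤ u i) (hu' : ∀ i, u' i ≤ 1)
    (huu' : ∀ i, u i ≤ u' i)
    (S : List (Fin N)) (hS : S.Perm (List.finRange N)) :
    reward g q (attrList f u C S) ≤ reward g q (attrList f' u' C S) := by
  exact (reward_attr_aux g q hq0 hqg C f f' hf hff' u u' hu huu' S []).2
end

section
/- (Key Lipschitz bound in the proof of Theorem 2) Let z and z' be lists of length N with 0 ≤ z_k ≤ z'_k ≤ 1 for every index k, and suppose g < 1. Then R_{g,q}(z') − R_{g,q}(z) ≤ ((1 − g^N)/(1 − g)) · ∑_{k=1}^N κ_k · (z'_k − z_k), where κ_k = ∏_{j=1}^{k−1} ((g−q)·z_j + q) is the examination probability of position k under the smaller list z. -/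
theorem reward_lipschitz_aux (g q : ℝ) (hq0 : 0 ≤ q) (hqg : q ≤ g) (hg1 : g < 1)
    (z z' : List ℝ)
    (hzz' : List.Forall₂ (fun a b => 0 ≤ a ∧ a ≤ b ∧ b ≤ 1) z z') :
    0 ≤ reward g q z' ∧ reward g q z' ≤ (1 - g ^ z.length) / (1 - g) ∧
    0 ≤ ∑ k ∈ Finset.range z.length,
          ((z.take k).map (fun x => (g - q) * x + q)).prod * (z'.getD k 0 - z.getD k 0) ∧
    reward g q z' - reward g q z ≤
      (1 - g ^ z.length) / (1 - g) *
        ∑ k ∈ Finset.range z.length,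
          ((z.take k).map (fun x => (g - q) * x + q)).prod * (z'.getD k 0 - z.getD k 0) := by
  induction hzz' with
  | nil => simp [reward]
  | @cons a b t t' hab _ ih =>
    obtain ⟨ha, hab, hb⟩ := hab
    have hg0 : 0 ≤ g := hq0.trans hqg
    have h1g : 0 < 1 - g := by linarith
    have hG : (1 - g ^ (t.length + 1)) / (1 - g) = 1 + g * ((1 - g ^ t.length) / (1 - g)) := by
      field_simp
      ring
    have hG' : (1 - g ^ (t.length + 1)) / (1 - g)
        = (1 - g ^ t.length) / (1 - g) + g ^ t.length := by
      field_simp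
      ring
    have hp : 0 ≤ g ^ t.length := pow_nonneg hg0 _
    have hS : ∑ k ∈ Finset.range (t.length + 1),
        (((a :: t).take k).map (fun x => (g - q) * x + q)).prod
          * ((b :: t').getD k 0 - (a :: t).getD k 0)
        = (b - a) + ((g - q) * a + q) * ∑ k ∈ Finset.range t.length,
          ((t.take k).map (fun x => (g - q) * x + q)).prod * (t'.getD k 0 - t.getD k 0) := by
      rw [Finset.sum_range_succ', Finset.mul_sum, add_comm]
      simp [mul_assoc]
    rw [List.length_cons, hS]
    obtain ⟨h1, h2, h3, h4⟩ := ih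
    generalize (1 - g ^ (t.length + 1)) / (1 - g) = G' at *
    generalize (1 - g ^ t.length) / (1 - g) = G at *
    generalize (∑ k ∈ Finset.range t.length,
          ((t.take k).map (fun x => (g - q) * x + q)).prod * (t'.getD k 0 - t.getD k 0)) = S at *
    simp only [reward]
    generalize reward g q t' = r' at *
    generalize reward g q t = r at *
    have hd : 0 ≤ g - q := by linarith
    have hca : 0 ≤ (g - q) * a + q := by positivity
    have hcb : 0 ≤ (g - q) * b + q := add_nonneg (mul_nonneg hd (ha.trans hab)) hq0
    have hcb' : (g - q) * b + q ≤ g := by nlinarith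
    have hGG : G ≤ G' := by linarith
    refine ⟨by nlinarith [mul_nonneg hcb h1], ?_, by nlinarith [mul_nonneg hca h3], ?_⟩
    · have := mul_le_mul hcb' h2 h1 hg0
      linarith
    · have e1 : 1 + (g - q) * r' ≤ G' := by
        have := mul_le_mul (sub_le_self g hq0) h2 h1 hg0
        linarith
      have e2 := mul_le_mul_of_nonneg_left e1 (sub_nonneg.2 hab)
      have e3 := mul_le_mul_of_nonneg_left (h4.trans (mul_le_mul_of_nonneg_right hGG h3)) hca
      linarith

/-- Key Lipschitz bound in the proof of Theorem 2: if `0 ≤ z_k ≤ z'_k ≤ 1` entrywise and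
`g < 1`, then `R_{g,q}(z') - R_{g,q}(z)` is at most `(1-g^N)/(1-g)` times the
`κ`-weighted sum of the entrywise gaps, where `κ_k = ∏_{j<k} ((g-q)·z_j + q)` is the
examination probability of position `k` under the smaller list `z`. -/
theorem reward_lipschitz (g q : ℝ) (hq0 : 0 ≤ q) (hqg : q ≤ g) (hg1 : g < 1)
    (N : ℕ) (z z' : List ℝ) (hlen : z.length = N)
    (hzz' : List.Forall₂ (fun a b => 0 ≤ a ∧ a ≤ b ∧ b ≤ 1) z z') :
    reward g q z' - reward g q z ≤
      (1 - g ^ N) / (1 - g) *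
        ∑ k ∈ Finset.range N,
          ((z.take k).map (fun x => (g - q) * x + q)).prod * (z'.getD k 0 - z.getD k 0) := by
  subst hlen
  exact (reward_lipschitz_aux g q hq0 hqg hg1 z z' hzz').2.2.2
end
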